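/- Let A be an n×n complex Hermitian matrix, let p(z₁,…,z_n) = det(Z − A)² ∈ ℝ[z₁,…,z_n] where Z = diag(z₁,…,z_n), and let z ∈ ℝ^n be a point such that the real matrix Z − A (with Z = diag(z)) is positive definite (equivalently, z is above the roots of p). Set δ := min_{1 ≤ i ≤ n} 1/(4·((Z − A)^{-1})_{ii}). Then z − δ·(1,…,1) is above the roots of ∂ⁿp/∂z₁⋯∂z_n, i.e. (∂ⁿp/∂z₁⋯∂z_n)(z − δ·(1,…,1) + t) ≠ 0 for every t ∈ ℝ^n with all coordinates ≥ 0. -/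

import Mathlib

open Polynomial Matrix
open scoped ComplexOrder

/-- The formal partial derivative `∂/∂zᵢ` as a linear endomorphism of `ℂ[z₁,…,z_n]`. -/
noncomputable def pd {n : ℕ} (i : Fin n) :
    MvPolynomial (Fin n) ℂ →ₗ[ℂ] MvPolynomial (Fin n) ℂ :=
  (MvPolynomial.pderiv i).toLinearMap

/-- The matrix `Z - A`, where `Z = diag(z₁,…,z_n)` is the diagonal matrix of indeterminates. -/
noncomputable def ZsubA {n : ℕ} (A : Matrix (Fin n) (Fin n) ℂ) :
    Matrix (Fin n) (Fin n) (MvPolynomial (Fin n) ℂ) :=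
  Matrix.of fun i j => (if i = j then MvPolynomial.X i else 0) - MvPolynomial.C (A i j)

/-!
A stable polynomial `p` satisfies the strong Rayleigh inequality `∂ᵢ∂ⱼp · p ≤ ∂ᵢp · ∂ⱼp` on `ℝⁿ`,
which says that the barrier functions `Φⁱ = ∂ᵢ log p` decrease in every coordinate above the roots
of `p`. When `p` has degree at most two in each variable, the Rayleigh inequality at the two points
`z` and `z - 2δeⱼ` shows that replacing `p` by `∂ⱼp` and `z` by `z - δeⱼ` increases no barrier,
provided `Φʲ(z) ≤ 1/(2δ)`; the new point is then above the roots of `∂ⱼp`, so the step can be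
repeated for every `j`. For `p = det(Z - A)²` the barriers are `Φⁱ(z) = 2 ((Z - A)⁻¹)ᵢᵢ`, and `∂ⁿp`
is not the zero polynomial since applying `∂₁⋯∂ₙ` once more gives the constant `2ⁿ`.
-/

open MvPolynomial (pderiv)
open scoped Topology

section Univariate

lemma natDegree_le_two_of_derivative_eq_zero {R : Type*} [Semiring R] [NoZeroDivisors R]
    [CharZero R] {f : R[X]}
    (hf : derivative (derivative (derivative f)) = 0) : f.natDegree ≤ 2 := by
  refine natDegree_le_iff_coeff_eq_zero.2 fun m hm => ?_
  obtain ⟨k, rfl⟩ := Nat.exists_eq_add_of_le' (Nat.succ_le_of_lt hm)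
  have h := congrArg (coeff · k) hf
  simp only [coeff_derivative, coeff_zero, mul_eq_zero] at h
  norm_cast at h
  simpa using h

lemma im_eval_derivative_div_eval_nonpos {f : ℂ[X]} (hf : ∀ s : ℂ, 0 < s.im → f.eval s ≠ 0)
    {s : ℂ} (hs : 0 < s.im) : ((derivative f).eval s / f.eval s).im ≤ 0 := by
  rw [(IsAlgClosed.splits f).eval_derivative_div_eval_of_ne_zero (hf s hs)]
  refine Multiset.sum_induction (fun u : ℂ => u.im ≤ 0) _ (fun u v => add_nonpos) le_rfl ?_
  simp only [Multiset.mem_map, forall_exists_index, and_imp, forall_apply_eq_imp_iff₂]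
  intro r hr
  have hr_im : r.im ≤ 0 := not_lt.1 fun h => hf r h (isRoot_of_mem_roots hr)
  have hsr : 0 ≤ (s - r).im := by rw [Complex.sub_im]; linarith
  rw [one_div, Complex.inv_im]
  exact div_nonpos_of_nonpos_of_nonneg (neg_nonpos.2 hsr) (Complex.normSq_nonneg _)

lemma derivative_eq_zero_of_eval_pos {f : ℝ[X]} (hpos : ∀ s, 0 ≤ s → 0 < f.eval s)
    (hderiv : ∀ s, 0 ≤ s → (derivative f).eval s ≤ 0) : derivative f = 0 := by
  have hanti : AntitoneOn (fun s => f.eval s) (Set.Ici 0) :=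
    antitoneOn_of_deriv_nonpos (convex_Ici 0) f.continuous.continuousOn
      f.differentiable.differentiableOn fun s hs => by
        rw [Polynomial.deriv]
        exact hderiv s (interior_subset hs)
  have hbounded : Filter.IsBoundedUnder (· ≤ ·) Filter.atTop fun s => |f.eval s| := by
    refine Filter.isBoundedUnder_of_eventually_le (a := f.eval 0) ?_
    filter_upwards [Filter.eventually_ge_atTop 0] with s hs
    rw [abs_of_pos (hpos s hs)]
    exact hanti Set.self_mem_Ici hs hs
  rw [eq_C_of_degree_le_zero (f.isBoundedUnder_abs_atTop_iff.1 hbounded), derivative_C]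

end Univariate

section LineRestriction

variable {σ R S : Type*} [CommSemiring R] [CommSemiring S] [Algebra R S]

/-- The univariate polynomial `s ↦ p (w + s v)`, the restriction of `p` to the parametrized line
through `w` in direction `v`. -/
noncomputable def lineRestrict (w v : σ → S) : MvPolynomial σ R →ₐ[R] S[X] :=
  MvPolynomial.aeval fun i => C (w i) + C (v i) * X

lemma eval_lineRestrict (w v : σ → S) (p : MvPolynomial σ R) (s : S) :
    (lineRestrict w v p).eval s = MvPolynomial.aeval (w + s • v) p := by
  induction p using MvPolynomial.induction_on with
  | C r => simp [lineRestrict, Polynomial.algebraMap_apply]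
  | add p q hp hq => simp only [map_add, eval_add, hp, hq]
  | mul_X p i hp =>
    have hX : (lineRestrict w v (MvPolynomial.X i : MvPolynomial σ R)).eval s = w i + v i * s := by
      simp [lineRestrict]
    simp only [map_mul, eval_mul, hp, hX, MvPolynomial.aeval_X, Pi.add_apply, Pi.smul_apply,
      smul_eq_mul, mul_comm s]

lemma eval_zero_lineRestrict (w v : σ → S) (p : MvPolynomial σ R) :
    (lineRestrict w v p).eval 0 = MvPolynomial.aeval w p := by
  rw [eval_lineRestrict, zero_smul, add_zero]

lemma derivative_lineRestrict [Fintype σ] (w v : σ → S) (p : MvPolynomial σ R) :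
    derivative (lineRestrict w v p) = ∑ i, v i • lineRestrict w v (pderiv i p) := by
  classical
  induction p using MvPolynomial.induction_on with
  | C r => simp [lineRestrict, Polynomial.algebraMap_apply]
  | add p q hp hq => simp only [map_add, hp, hq, smul_add, Finset.sum_add_distrib]
  | mul_X p i hp =>
    have hX : derivative (lineRestrict w v (MvPolynomial.X i : MvPolynomial σ R)) = C (v i) := by
      simp [lineRestrict]
    simp only [map_mul, derivative_mul, hp, hX, MvPolynomial.pderiv_mul, MvPolynomial.pderiv_X,
      map_add, smul_add, Finset.sum_add_distrib, Finset.sum_mul, smul_mul_assoc]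
    congr 1
    rw [Finset.sum_eq_single_of_mem i (Finset.mem_univ i) fun k _ hk => by simp [hk]]
    simp [smul_eq_C_mul, mul_comm]

lemma derivative_lineRestrict_single [DecidableEq σ] (w : σ → S) (j : σ) (c : S)
    (p : MvPolynomial σ R) :
    derivative (lineRestrict w (Pi.single j c) p)
      = c • lineRestrict w (Pi.single j c) (pderiv j p) := by
  induction p using MvPolynomial.induction_on with
  | C r => simp [lineRestrict, Polynomial.algebraMap_apply]
  | add p q hp hq => simp only [map_add, hp, hq, smul_add]
  | mul_X p i hp =>
    have hX : derivative (lineRestrict w (Pi.single j c) (MvPolynomial.X i : MvPolynomial σ R))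
        = c • lineRestrict w (Pi.single j c) (pderiv j (MvPolynomial.X i : MvPolynomial σ R)) := by
      rcases eq_or_ne i j with rfl | hij
      · simp [lineRestrict, smul_eq_C_mul]
      · simp [lineRestrict, hij, MvPolynomial.pderiv_X_of_ne hij]
    simp only [map_mul, derivative_mul, hp, hX, MvPolynomial.pderiv_mul, map_add, smul_add,
      smul_mul_assoc, mul_smul_comm]

end LineRestriction

section MixedPDeriv

variable {σ R : Type*}

section CommSemiring

variable [CommSemiring R]

/-- The iterated partial derivative `∂_{i₁} ⋯ ∂_{i_k}` along the list `[i₁, …, i_k]`. -/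
noncomputable def mixedPDeriv (l : List σ) : Module.End R (MvPolynomial σ R) :=
  (l.map fun i => (pderiv i).toLinearMap).prod

lemma mixedPDeriv_nil (p : MvPolynomial σ R) : mixedPDeriv [] p = p := rfl

lemma mixedPDeriv_cons (i : σ) (l : List σ) (p : MvPolynomial σ R) :
    mixedPDeriv (i :: l) p = pderiv i (mixedPDeriv l p) := rfl

lemma map_mixedPDeriv {S : Type*} [CommSemiring S] (φ : R →+* S) (l : List σ)
    (p : MvPolynomial σ R) :
    MvPolynomial.map φ (mixedPDeriv l p) = mixedPDeriv l (MvPolynomial.map φ p) := by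
  induction l with
  | nil => rfl
  | cons i l ih => rw [mixedPDeriv_cons, mixedPDeriv_cons, ← ih, MvPolynomial.pderiv_map]

end CommSemiring

variable [CommRing R]

lemma pderiv_pderiv_comm (i j : σ) (p : MvPolynomial σ R) :
    pderiv i (pderiv j p) = pderiv j (pderiv i p) := by
  classical
  have h : ⁅(pderiv i : Derivation R (MvPolynomial σ R) _), pderiv j⁆ = 0 :=
    MvPolynomial.derivation_ext fun k => by
      rw [Derivation.commutator_apply]
      simp [Pi.single_apply, apply_ite (pderiv _)]
  rw [← sub_eq_zero, ← Derivation.commutator_apply, h, Derivation.coe_zero, Pi.zero_apply]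

lemma pderiv_mixedPDeriv (i : σ) (l : List σ) (p : MvPolynomial σ R) :
    pderiv i (mixedPDeriv l p) = mixedPDeriv l (pderiv i p) := by
  induction l with
  | nil => rfl
  | cons j l ih => rw [mixedPDeriv_cons, mixedPDeriv_cons, pderiv_pderiv_comm, ih]

lemma pderiv_pderiv_sq {i : σ} {p : MvPolynomial σ R} (hp : pderiv i (pderiv i p) = 0) :
    pderiv i (pderiv i (p ^ 2)) = 2 * pderiv i p ^ 2 := by
  simp only [sq, MvPolynomial.pderiv_mul, map_add, hp]
  ring

lemma pderiv_pderiv_pderiv_sq {i : σ} {p : MvPolynomial σ R} (hp : pderiv i (pderiv i p) = 0) :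
    pderiv i (pderiv i (pderiv i (p ^ 2))) = 0 := by
  rw [pderiv_pderiv_sq hp, two_mul, map_add, sq, MvPolynomial.pderiv_mul, hp]
  simp only [zero_mul, mul_zero, add_zero]

lemma mixedPDeriv_mixedPDeriv_sq (l : List σ) {p : MvPolynomial σ R}
    (hp : ∀ i, pderiv i (pderiv i p) = 0) :
    mixedPDeriv l (mixedPDeriv l (p ^ 2)) = 2 ^ l.length * mixedPDeriv l p ^ 2 := by
  induction l generalizing p with
  | nil => simp [mixedPDeriv_nil]
  | cons i l ih =>
    have hp' (j : σ) : pderiv j (pderiv j (pderiv i p)) = 0 := by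
      rw [pderiv_pderiv_comm j i, pderiv_pderiv_comm j i, hp, map_zero]
    have htwo (q : MvPolynomial σ R) : mixedPDeriv l (2 * q) = 2 * mixedPDeriv l q := by
      simp only [two_mul, map_add]
    rw [mixedPDeriv_cons, mixedPDeriv_cons, mixedPDeriv_cons, pderiv_mixedPDeriv,
      pderiv_mixedPDeriv, pderiv_mixedPDeriv, pderiv_mixedPDeriv, pderiv_pderiv_sq (hp i),
      htwo, htwo, ih hp', List.length_cons, pow_succ']
    ring

end MixedPDeriv

lemma eval_add_single_of_pderiv_eq_zero {σ K : Type*} [Field K] [CharZero K] [DecidableEq σ]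
    {p : MvPolynomial σ K} {j : σ} (hp : pderiv j (pderiv j (pderiv j p)) = 0) (x : σ → K) (s : K) :
    MvPolynomial.eval (x + Pi.single j s) p
      = MvPolynomial.eval x p + s * MvPolynomial.eval x (pderiv j p)
        + s ^ 2 / 2 * MvPolynomial.eval x (pderiv j (pderiv j p)) := by
  set L : MvPolynomial σ K →ₐ[K] K[X] := lineRestrict x (Pi.single j 1) with hL
  have hderiv (q : MvPolynomial σ K) : derivative (L q) = L (pderiv j q) := by
    rw [hL, derivative_lineRestrict_single, one_smul]
  have heval (q : MvPolynomial σ K) : MvPolynomial.eval x q = (L q).coeff 0 := by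
    rw [coeff_zero_eq_eval_zero, eval_zero_lineRestrict, MvPolynomial.aeval_eq_eval]
  have hdeg : (L p).natDegree < 3 := Nat.lt_succ_of_le <|
    natDegree_le_two_of_derivative_eq_zero (by simp only [hderiv, hp, map_zero])
  have hline : MvPolynomial.eval (x + Pi.single j s) p = (L p).eval s := by
    rw [eval_lineRestrict, MvPolynomial.aeval_eq_eval, ← Pi.single_smul, smul_eq_mul, mul_one]
  rw [hline, eval_eq_sum_range' hdeg]
  simp only [heval, ← hderiv, coeff_derivative, Finset.sum_range_succ, Finset.sum_range_zero]
  push_cast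
  ring

lemma aeval_eq_eval_of_map_eq {σ R S : Type*} [CommSemiring R] [CommSemiring S] [Algebra R S]
    {p : MvPolynomial σ R} {q : MvPolynomial σ S} (h : MvPolynomial.map (algebraMap R S) p = q)
    (w : σ → S) : MvPolynomial.aeval w p = MvPolynomial.eval w q := by
  rw [← h, MvPolynomial.eval_map, MvPolynomial.aeval_def]

section RealStable

variable {σ : Type*} {p : MvPolynomial σ ℝ}

/-- A real polynomial is *real stable* if it has no zero all of whose coordinates lie in the open
upper half-plane. -/
def IsRealStable (p : MvPolynomial σ ℝ) : Prop :=
  ∀ w : σ → ℂ, (∀ i, 0 < (w i).im) → MvPolynomial.aeval w p ≠ 0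

lemma aeval_ofReal (x : σ → ℝ) (p : MvPolynomial σ ℝ) :
    MvPolynomial.aeval (fun i => (x i : ℂ)) p = (MvPolynomial.eval x p : ℂ) := by
  rw [← MvPolynomial.aeval_eq_eval]
  exact MvPolynomial.aeval_algebraMap_apply ℂ x p

lemma analyticOnNhd_aeval [Fintype σ] {𝕜 : Type*} [RCLike 𝕜] (p : MvPolynomial σ ℝ) :
    AnalyticOnNhd 𝕜 (fun u : σ → 𝕜 => MvPolynomial.aeval u p) Set.univ :=
  AnalyticOnNhd.aeval_mvPolynomial (f := fun u => u)
    (fun i => (ContinuousLinearMap.proj (R := 𝕜) (φ := fun _ : σ => 𝕜) i).analyticOnNhd _) p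

lemma eq_zero_of_eventually_aeval_eq_zero [Finite σ] {𝕜 : Type*} [RCLike 𝕜] {w : σ → 𝕜}
    (h : ∀ᶠ u in 𝓝 w, MvPolynomial.aeval u p = 0) : p = 0 := by
  have := Fintype.ofFinite σ
  have hp : AnalyticOnNhd 𝕜 (fun u : σ → 𝕜 => MvPolynomial.aeval u p) Set.univ :=
    analyticOnNhd_aeval p
  have hzero := hp.eq_of_eventuallyEq (g := fun _ => 0) analyticOnNhd_const h
  refine MvPolynomial.map_injective _ (algebraMap ℝ 𝕜).injective (MvPolynomial.funext fun u => ?_)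
  simpa [MvPolynomial.eval_map, MvPolynomial.aeval_def] using congrFun hzero u

namespace IsRealStable

lemma im_aeval_pderiv_div_nonpos (hp : IsRealStable p) (j : σ) {w : σ → ℂ}
    (hw : ∀ i, 0 < (w i).im) :
    (MvPolynomial.aeval w (pderiv j p) / MvPolynomial.aeval w p).im ≤ 0 := by
  classical
  set s : ℂ := (w j).im * Complex.I with hs
  have hs_im : s.im = (w j).im := by simp [hs]
  -- `w` is the point of parameter `s` on this line, whose base point has a real `j`-th coordinate.
  set L : MvPolynomial σ ℝ →ₐ[ℝ] ℂ[X] := lineRestrict (w - Pi.single j s) (Pi.single j 1) with hL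
  have hpoint (u : ℂ) (q : MvPolynomial σ ℝ) :
      (L q).eval u = MvPolynomial.aeval (w + Pi.single j (u - s)) q := by
    rw [hL, eval_lineRestrict, ← Pi.single_smul, smul_eq_mul, mul_one, sub_add, ← Pi.single_sub,
      ← neg_sub u s, Pi.single_neg, sub_neg_eq_add]
  have hstable (u : ℂ) (hu : 0 < u.im) : (L p).eval u ≠ 0 := by
    rw [hpoint]
    refine hp _ fun i => ?_
    rcases eq_or_ne i j with rfl | hij
    · simpa [hs_im] using hu
    · simpa [hij] using hw i
  have h := im_eval_derivative_div_eval_nonpos hstable (s := s) (hs_im ▸ hw j)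
  rwa [derivative_lineRestrict_single, one_smul, hpoint, hpoint, sub_self, Pi.single_zero,
    add_zero] at h

protected lemma pderiv [Finite σ] (hp : IsRealStable p) {j : σ} (hj : pderiv j p ≠ 0) :
    IsRealStable (pderiv j p) := by
  have := Fintype.ofFinite σ
  intro w hw hzero
  let f : (σ → ℂ) → ℂ := fun u => MvPolynomial.aeval u (pderiv j p) / MvPolynomial.aeval u p
  have hfw : f w = 0 := by simp only [f, hzero, zero_div]
  have hUpper : ∀ᶠ u in 𝓝 w, ∀ i, 0 < (u i).im := by
    refine Filter.eventually_all.2 fun i => ?_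
    exact (Complex.continuous_im.comp (continuous_apply i)).continuousAt.eventually_const_lt (hw i)
  have hf : AnalyticAt ℂ f w :=
    (analyticOnNhd_aeval _ w trivial).div (analyticOnNhd_aeval _ w trivial) (hp w hw)
  rcases hf.eventually_constant_or_nhds_le_map_nhds with hconst | hopen
  · refine hj (eq_zero_of_eventually_aeval_eq_zero (w := w) ?_)
    filter_upwards [hconst, hUpper] with u hu hu_im
    exact (div_eq_zero_iff.1 (hu.trans hfw)).resolve_right (hp u hu_im)
  · -- `f` is open at its zero `w`, yet its values near `w` avoid the upper half-plane.
    have hLower : ∀ᶠ s : ℂ in 𝓝 0, s.im ≤ 0 := by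
      rw [hfw] at hopen
      refine hopen (Filter.mem_map.2 ?_)
      filter_upwards [hUpper] with u hu using hp.im_aeval_pderiv_div_nonpos j hu
    have hray : Filter.Tendsto (fun ε : ℝ => (ε : ℂ) * Complex.I) (𝓝[>] 0) (𝓝 0) := by
      refine Filter.Tendsto.mono_left ?_ nhdsWithin_le_nhds
      simpa using (Complex.continuous_ofReal.mul_const Complex.I).tendsto 0
    obtain ⟨ε, hε_im, hε⟩ := ((hray.eventually hLower).and self_mem_nhdsWithin).exists
    simp only [Complex.mul_I_im, Complex.ofReal_re] at hε_im
    exact hε_im.not_gt hε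

lemma im_aeval_pderiv_mul_conj_nonpos [Finite σ] (hp : IsRealStable p) (j : σ) {w : σ → ℂ}
    (hw : ∀ i, 0 ≤ (w i).im) :
    (MvPolynomial.aeval w (pderiv j p) * star (MvPolynomial.aeval w p)).im ≤ 0 := by
  have := Fintype.ofFinite σ
  have hcont (q : MvPolynomial σ ℝ) : Continuous fun u : σ → ℂ => MvPolynomial.aeval u q :=
    continuousOn_univ.1 (analyticOnNhd_aeval (𝕜 := ℂ) q).continuousOn
  have hclosed : IsClosed {u : σ → ℂ |
      (MvPolynomial.aeval u (pderiv j p) * star (MvPolynomial.aeval u p)).im ≤ 0} :=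
    isClosed_le (Complex.continuous_im.comp ((hcont _).mul (hcont p).star)) continuous_const
  have hopen : Set.univ.pi (fun _ : σ => {s : ℂ | 0 < s.im}) ⊆ {u : σ → ℂ |
      (MvPolynomial.aeval u (pderiv j p) * star (MvPolynomial.aeval u p)).im ≤ 0} := by
    intro u hu
    have hu_im (i : σ) : 0 < (u i).im := hu i trivial
    have hmul : MvPolynomial.aeval u (pderiv j p) * star (MvPolynomial.aeval u p)
        = MvPolynomial.aeval u (pderiv j p) / MvPolynomial.aeval u p
          * (Complex.normSq (MvPolynomial.aeval u p) : ℂ) := by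
      rw [← Complex.mul_conj, ← mul_assoc, div_mul_cancel₀ _ (hp u hu_im)]
      rfl
    rw [Set.mem_ofPred_eq, hmul, Complex.im_mul_ofReal]
    exact mul_nonpos_of_nonpos_of_nonneg (hp.im_aeval_pderiv_div_nonpos j hu_im)
      (Complex.normSq_nonneg _)
  refine closure_minimal hopen hclosed ?_
  rw [closure_pi_set]
  intro i _
  rw [Complex.closure_setOfPred_lt_im]
  exact hw i

lemma eval_pderiv_pderiv_mul_le [Finite σ] (hp : IsRealStable p) (j k : σ) (x : σ → ℝ) :
    MvPolynomial.eval x (pderiv k (pderiv j p)) * MvPolynomial.eval x p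
      ≤ MvPolynomial.eval x (pderiv j p) * MvPolynomial.eval x (pderiv k p) := by
  classical
  set L : MvPolynomial σ ℝ →ₐ[ℝ] ℂ[X] :=
    lineRestrict (fun i => (x i : ℂ)) (Pi.single k Complex.I) with hL
  let f : ℝ → ℂ := fun ε => (L (pderiv j p)).eval (ε : ℂ) * star ((L p).eval (ε : ℂ))
  have heval (q : MvPolynomial σ ℝ) : (L q).eval ((0 : ℝ) : ℂ) = MvPolynomial.eval x q := by
    rw [Complex.ofReal_zero, eval_zero_lineRestrict, aeval_ofReal]
  have hderiv (q : MvPolynomial σ ℝ) : HasDerivAt (fun ε : ℝ => (L q).eval (ε : ℂ))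
      (Complex.I * MvPolynomial.eval x (pderiv k q)) 0 := by
    have h := ((L q).hasDerivAt ((0 : ℝ) : ℂ)).comp_ofReal
    rwa [derivative_lineRestrict_single, eval_smul, heval, smul_eq_mul] at h
  have hf : HasDerivAt (fun ε => (f ε).im)
      (MvPolynomial.eval x (pderiv k (pderiv j p)) * MvPolynomial.eval x p
        - MvPolynomial.eval x (pderiv j p) * MvPolynomial.eval x (pderiv k p)) 0 := by
    refine (Complex.imCLM.hasFDerivAt.comp_hasDerivAt (0 : ℝ)
      ((hderiv (pderiv j p)).mul (hderiv p).star)).congr_deriv ?_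
    simp only [heval]
    simp [sub_eq_add_neg]
  have hf_max : IsLocalMaxOn (fun ε => (f ε).im) (Set.Ici 0) 0 := by
    refine IsMaxOn.localize fun ε hε => ?_
    have hf_zero : (f 0).im = 0 := by simp [f, heval, -Complex.ofReal_zero]
    refine le_of_le_of_eq ?_ hf_zero.symm
    simp only [f, hL, eval_lineRestrict]
    refine hp.im_aeval_pderiv_mul_conj_nonpos j fun i => ?_
    rcases eq_or_ne i k with rfl | hik
    · simpa using hε
    · simp [hik]
  have hone : (1 : ℝ) ∈ posTangentConeAt (Set.Ici (0 : ℝ)) 0 :=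
    mem_posTangentConeAt_of_segment_subset <| by
      rw [zero_add, segment_eq_Icc zero_le_one]
      exact Set.Icc_subset_Ici_self
  simpa using hf_max.hasFDerivWithinAt_nonpos hf.hasFDerivAt.hasFDerivWithinAt hone

end IsRealStable

/-- The barrier function `Φ_p^i = ∂ᵢ log p` of Marcus, Spielman and Srivastava, as a quotient; it is
meant for points where `p` is positive. -/
noncomputable def barrier (p : MvPolynomial σ ℝ) (i : σ) (x : σ → ℝ) : ℝ :=
  MvPolynomial.eval x (pderiv i p) / MvPolynomial.eval x p

lemma barrier_sq (p : MvPolynomial σ ℝ) (i : σ) (x : σ → ℝ) :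
    barrier (p ^ 2) i x = 2 * barrier p i x := by
  simp only [barrier, sq, MvPolynomial.pderiv_mul, map_add, map_mul]
  rcases eq_or_ne (MvPolynomial.eval x p) 0 with hx | hx
  · simp [hx]
  · field

namespace IsRealStable

variable [Finite σ] {z : σ → ℝ}

lemma antitoneOn_barrier (hp : IsRealStable p)
    (hpos : ∀ x ∈ Set.Ici z, 0 < MvPolynomial.eval x p) (i : σ) :
    AntitoneOn (barrier p i) (Set.Ici z) := by
  have := Fintype.ofFinite σ
  intro x hx y _ hxy
  set L : MvPolynomial σ ℝ →ₐ[ℝ] ℝ[X] := lineRestrict x (y - x) with hL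
  have heval (q : MvPolynomial σ ℝ) (s : ℝ) :
      (L q).eval s = MvPolynomial.eval (x + s • (y - x)) q := by
    rw [hL, eval_lineRestrict, MvPolynomial.aeval_eq_eval]
  have hL_pos {s : ℝ} (hs : 0 ≤ s) : 0 < (L p).eval s := by
    rw [heval]
    exact hpos _ (le_add_of_le_of_nonneg hx (smul_nonneg hs (sub_nonneg.2 hxy)))
  have hderiv {s : ℝ} (hs : 0 ≤ s) :=
    ((L (pderiv i p)).hasDerivAt s).div ((L p).hasDerivAt s) (hL_pos hs).ne'
  have hanti : AntitoneOn (fun s => (L (pderiv i p)).eval s / (L p).eval s) (Set.Ici 0) := by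
    refine antitoneOn_of_deriv_nonpos (convex_Ici 0)
      (fun s hs => (hderiv hs).continuousAt.continuousWithinAt)
      (fun s hs => (hderiv (interior_subset hs)).differentiableAt.differentiableWithinAt) ?_
    intro s hs
    refine ((hderiv (interior_subset hs)).deriv).trans_le
      (div_nonpos_of_nonpos_of_nonneg ?_ (sq_nonneg _))
    rw [hL, derivative_lineRestrict, derivative_lineRestrict, ← hL]
    simp only [eval_finsetSum, eval_smul, smul_eq_mul, Finset.sum_mul, Finset.mul_sum,
      ← Finset.sum_sub_distrib, heval]
    refine Finset.sum_nonpos fun k _ => ?_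
    have hRayleigh := hp.eval_pderiv_pderiv_mul_le i k (x + s • (y - x))
    have hstep : 0 ≤ (y - x) k := sub_nonneg.2 (hxy k)
    nlinarith
  simpa [heval, barrier] using
    hanti Set.self_mem_Ici (Set.mem_Ici.2 zero_le_one) zero_le_one

lemma eval_pderiv_nonneg (hp : IsRealStable p)
    (hpos : ∀ x ∈ Set.Ici z, 0 < MvPolynomial.eval x p) (j : σ) :
    ∀ x ∈ Set.Ici z, 0 ≤ MvPolynomial.eval x (pderiv j p) := by
  classical
  intro x hx
  by_contra! hneg
  set L : MvPolynomial σ ℝ →ₐ[ℝ] ℝ[X] := lineRestrict x (Pi.single j 1) with hL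
  have heval (q : MvPolynomial σ ℝ) (s : ℝ) :
      (L q).eval s = MvPolynomial.eval (x + s • Pi.single j 1) q := by
    rw [hL, eval_lineRestrict, MvPolynomial.aeval_eq_eval]
  have hderiv : derivative (L p) = L (pderiv j p) := by
    rw [hL, derivative_lineRestrict_single, one_smul]
  have hray {s : ℝ} (hs : 0 ≤ s) : x ≤ x + s • Pi.single j 1 :=
    le_add_of_nonneg_right (smul_nonneg hs (Pi.single_nonneg.2 zero_le_one))
  have hL_pos {s : ℝ} (hs : 0 ≤ s) : 0 < (L p).eval s := by
    rw [heval]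
    exact hpos _ (le_trans hx (hray hs))
  have hderiv_neg {s : ℝ} (hs : 0 ≤ s) : (derivative (L p)).eval s < 0 := by
    have hbarrier : barrier p j (x + s • Pi.single j 1) < 0 :=
      (hp.antitoneOn_barrier hpos j hx (le_trans hx (hray hs)) (hray hs)).trans_lt
        (div_neg_of_neg_of_pos hneg (hpos x hx))
    rw [barrier, ← heval, ← heval] at hbarrier
    rw [hderiv]
    exact (div_neg_iff.1 hbarrier).resolve_left (fun h => (hL_pos hs).not_gt h.2) |>.1
  have hzero : derivative (L p) = 0 :=
    derivative_eq_zero_of_eval_pos (fun s hs => hL_pos hs) fun s hs => (hderiv_neg hs).le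
  simpa [hzero] using hderiv_neg le_rfl

lemma eval_pderiv_pos (hp : IsRealStable p)
    (hpos : ∀ x ∈ Set.Ici z, 0 < MvPolynomial.eval x p) {j : σ} (hj : pderiv j p ≠ 0) :
    ∀ x ∈ Set.Ici z, 0 < MvPolynomial.eval x (pderiv j p) := by
  have := Fintype.ofFinite σ
  intro x hx
  refine (hp.eval_pderiv_nonneg hpos j x hx).lt_of_ne' fun hzero => hj ?_
  refine eq_zero_of_eventually_aeval_eq_zero (w := x + 1) ?_
  have hnear : ∀ᶠ u in 𝓝 (x + 1), ∀ i, x i < u i :=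
    Filter.eventually_all.2 fun i =>
      (continuous_apply i).continuousAt.eventually_const_lt (lt_add_one (x i))
  filter_upwards [hnear] with u hu
  have hxu : x ≤ u := fun i => (hu i).le
  have hzu : u ∈ Set.Ici z := le_trans hx hxu
  have hbarrier : barrier p j u ≤ 0 := by
    simpa [barrier, hzero] using hp.antitoneOn_barrier hpos j hx hzu hxu
  rw [MvPolynomial.aeval_eq_eval]
  refine le_antisymm ?_ (hp.eval_pderiv_nonneg hpos j u hzu)
  simpa using (div_le_iff₀ (hpos u hzu)).1 hbarrier

end IsRealStable

/-- With `q y = c - b y + a y² / 2` and `r y = c' - b' y + a' y² / 2`, the last two hypotheses are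
`r' q ≥ r q'` at `y = 0` and at `y = 2δ`; the conclusion compares `r' / q'` at `y = δ` with `r / q`
at `y = 0`. -/
lemma quadratic_barrier_shift_le {a b c a' b' c' δ : ℝ} (hc : 0 < c) (ha : 0 ≤ a)
    (hbc : 2 * δ * b ≤ c) (hzero : b' * c ≤ c' * b)
    (hshift : (b' - 2 * δ * a') * (c - 2 * δ * b + (2 * δ) ^ 2 / 2 * a)
      ≤ (c' - 2 * δ * b' + (2 * δ) ^ 2 / 2 * a') * (b - 2 * δ * a)) :
    (b' - δ * a') * c ≤ c' * (b - δ * a) := by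
  have hshift_mul := mul_nonneg hc.le (sub_nonneg.2 hshift)
  have hzero_mul := mul_nonneg (sub_nonneg.2 hzero)
    (show 0 ≤ c - 2 * δ * b + 2 * δ ^ 2 * a by nlinarith [mul_nonneg (sq_nonneg δ) ha])
  refine sub_nonneg.1 (nonneg_of_mul_nonneg_left ?_ (show 0 < 2 * c - 2 * δ * b by linarith))
  linarith

namespace IsRealStable

variable [Finite σ] {z : σ → ℝ} {δ : ℝ} {j : σ}

lemma two_mul_mul_eval_pderiv_le (hp : IsRealStable p)
    (hpos : ∀ x ∈ Set.Ici z, 0 < MvPolynomial.eval x p) (hδ : 0 ≤ δ)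
    (hbarrier : 2 * δ * barrier p j z ≤ 1) :
    ∀ x ∈ Set.Ici z, 2 * δ * MvPolynomial.eval x (pderiv j p) ≤ MvPolynomial.eval x p := by
  intro x hx
  have hx_barrier : 2 * δ * barrier p j x ≤ 1 :=
    (mul_le_mul_of_nonneg_left (hp.antitoneOn_barrier hpos j Set.self_mem_Ici hx hx)
      (by positivity)).trans hbarrier
  rwa [barrier, ← mul_div_assoc, div_le_one (hpos x hx)] at hx_barrier

variable [DecidableEq σ]

lemma eval_pderiv_pos_of_sub_single (hp : IsRealStable p)
    (hpos : ∀ x ∈ Set.Ici z, 0 < MvPolynomial.eval x p) (hj : pderiv j p ≠ 0)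
    (hcubic : pderiv j (pderiv j (pderiv j p)) = 0) (hδ : 0 ≤ δ)
    (hbarrier : 2 * δ * barrier p j z ≤ 1) :
    ∀ x ∈ Set.Ici (z - Pi.single j δ), 0 < MvPolynomial.eval x (pderiv j p) := by
  intro x hx
  have hzx : x + Pi.single j δ ∈ Set.Ici z := Set.mem_Ici.2 (sub_le_iff_le_add.1 hx)
  have hshift := eval_add_single_of_pderiv_eq_zero (p := pderiv j p) (j := j)
    (by rw [hcubic, map_zero]) (x + Pi.single j δ) (-δ)
  rw [Pi.single_neg, add_neg_cancel_right, hcubic, map_zero, mul_zero, add_zero] at hshift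
  rw [hshift]
  have hc := hpos _ hzx
  have hb := hp.eval_pderiv_pos hpos hj _ hzx
  have hbc := hp.two_mul_mul_eval_pderiv_le hpos hδ hbarrier _ hzx
  have hRayleigh := hp.eval_pderiv_pderiv_mul_le j j (x + Pi.single j δ)
  refine pos_of_mul_pos_left ?_ hc.le
  nlinarith

lemma barrier_pderiv_sub_single_le (hp : IsRealStable p)
    (hpos : ∀ x ∈ Set.Ici z, 0 < MvPolynomial.eval x p) (hj : pderiv j p ≠ 0)
    (hcubic : pderiv j (pderiv j (pderiv j p)) = 0) (hδ : 0 ≤ δ)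
    (hbarrier : 2 * δ * barrier p j z ≤ 1) (i : σ) :
    barrier (pderiv j p) i (z - Pi.single j δ) ≤ barrier p i z := by
  have hcubic_i : pderiv j (pderiv j (pderiv j (pderiv i p))) = 0 := by
    rw [pderiv_pderiv_comm j i, pderiv_pderiv_comm j i, pderiv_pderiv_comm j i, hcubic, map_zero]
  have hshift {q : MvPolynomial σ ℝ} (hq : pderiv j (pderiv j (pderiv j q)) = 0) (y : ℝ) :
      MvPolynomial.eval (z - Pi.single j y) q
        = MvPolynomial.eval z q - y * MvPolynomial.eval z (pderiv j q)
          + y ^ 2 / 2 * MvPolynomial.eval z (pderiv j (pderiv j q)) := by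
    rw [sub_eq_add_neg, ← Pi.single_neg, eval_add_single_of_pderiv_eq_zero hq]
    ring
  have hshift_pderiv {q : MvPolynomial σ ℝ} (hq : pderiv j (pderiv j (pderiv j q)) = 0) (y : ℝ) :
      MvPolynomial.eval (z - Pi.single j y) (pderiv j q)
        = MvPolynomial.eval z (pderiv j q)
          - y * MvPolynomial.eval z (pderiv j (pderiv j q)) := by
    rw [hshift (by rw [hq, map_zero]), hq, map_zero, mul_zero, add_zero]
  have hc := hpos z Set.self_mem_Ici
  have hbc := hp.two_mul_mul_eval_pderiv_le hpos hδ hbarrier z Set.self_mem_Ici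
  have ha : 0 ≤ MvPolynomial.eval z (pderiv j (pderiv j p)) :=
    (hp.pderiv hj).eval_pderiv_nonneg (hp.eval_pderiv_pos hpos hj) j z Set.self_mem_Ici
  have hRayleigh := hp.eval_pderiv_pderiv_mul_le i j z
  have hRayleigh_shift := hp.eval_pderiv_pderiv_mul_le i j (z - Pi.single j (2 * δ))
  have hden := hp.eval_pderiv_pos_of_sub_single hpos hj hcubic hδ hbarrier _ Set.self_mem_Ici
  rw [barrier, barrier, div_le_div_iff₀ hden hc, pderiv_pderiv_comm i j]
  simp only [hshift hcubic, hshift hcubic_i, hshift_pderiv hcubic, hshift_pderiv hcubic_i]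
    at hRayleigh_shift ⊢
  exact quadratic_barrier_shift_le hc ha hbc (by linarith) hRayleigh_shift

end IsRealStable

/-- `z` is a *barrier point* of `p` at step `δ` if `p` is real stable, of degree at most two in each
variable, positive on the orthant above `z`, and all its barriers at `z` are at most `1 / (2δ)`.
These are the conditions that survive a partial derivative `∂ⱼ` when `z` moves back by `δ` in
coordinate `j`. -/
structure IsBarrierPoint (δ : ℝ) (p : MvPolynomial σ ℝ) (z : σ → ℝ) : Prop where
  isRealStable : IsRealStable p
  pderiv_cubed (i : σ) : pderiv i (pderiv i (pderiv i p)) = 0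
  eval_pos : ∀ x ∈ Set.Ici z, 0 < MvPolynomial.eval x p
  mul_barrier_le (i : σ) : 2 * δ * barrier p i z ≤ 1

namespace IsBarrierPoint

variable [Finite σ] [DecidableEq σ] {z : σ → ℝ} {δ : ℝ}

protected lemma pderiv (h : IsBarrierPoint δ p z) (hδ : 0 ≤ δ) {j : σ} (hj : pderiv j p ≠ 0) :
    IsBarrierPoint δ (pderiv j p) (z - Pi.single j δ) where
  isRealStable := h.isRealStable.pderiv hj
  pderiv_cubed i := by simp only [pderiv_pderiv_comm i j, h.pderiv_cubed i, map_zero]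
  eval_pos := h.isRealStable.eval_pderiv_pos_of_sub_single h.eval_pos hj (h.pderiv_cubed j) hδ
    (h.mul_barrier_le j)
  mul_barrier_le i := (mul_le_mul_of_nonneg_left (h.isRealStable.barrier_pderiv_sub_single_le
    h.eval_pos hj (h.pderiv_cubed j) hδ (h.mul_barrier_le j) i) (by positivity)).trans
    (h.mul_barrier_le i)

protected lemma mixedPDeriv (h : IsBarrierPoint δ p z) (hδ : 0 ≤ δ) {l : List σ}
    (hl : mixedPDeriv l p ≠ 0) :
    IsBarrierPoint δ (mixedPDeriv l p) (z - (l.map fun i => Pi.single i δ).sum) := by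
  induction l with
  | nil => simpa [mixedPDeriv_nil] using h
  | cons i l ih =>
    rw [mixedPDeriv_cons] at hl ⊢
    rw [List.map_cons, List.sum_cons, add_comm, ← sub_sub]
    exact (ih fun hzero => hl (by rw [hzero, map_zero])).pderiv hδ hl

end IsBarrierPoint

end RealStable

section Determinant

variable {ι k R : Type*} [Fintype ι] [DecidableEq ι] [CommSemiring k] [CommRing R] [Algebra k R]

lemma derivation_det_eq_zero (D : Derivation k R R) {M : Matrix ι ι R}
    (hM : ∀ i m, D (M i m) = 0) : D M.det = 0 := by
  have hprod (τ : Equiv.Perm ι) : D (∏ i, M (τ i) i) = 0 :=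
    Finset.prod_induction _ (fun r => D r = 0) (fun a b ha hb => by rw [D.leibniz, ha, hb]; simp)
      D.map_one_eq_zero fun i _ => hM _ i
  rw [det_apply, map_sum]
  exact Finset.sum_eq_zero fun τ _ => by rw [D.map_smul_of_tower, hprod, smul_zero]

lemma derivation_adjugate_eq_zero (D : Derivation k R R) {M : Matrix ι ι R} (j : ι)
    (hM : ∀ i, i ≠ j → ∀ m, D (M i m) = 0) (m : ι) : D (M.adjugate m j) = 0 := by
  rw [adjugate_apply]
  refine derivation_det_eq_zero D fun i l => ?_
  rcases eq_or_ne i j with rfl | hij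
  · rw [updateRow_self]
    rcases eq_or_ne l m with rfl | hlm
    · rw [Pi.single_eq_same, D.map_one_eq_zero]
    · rw [Pi.single_eq_of_ne hlm, map_zero]
  · rw [updateRow_ne hij, hM i hij]

lemma derivation_det_of_row (D : Derivation k R R) {M : Matrix ι ι R} (j : ι)
    (hM : ∀ i, i ≠ j → ∀ m, D (M i m) = 0) :
    D M.det = (M.updateRow j fun m => D (M j m)).det := by
  rw [← cramer_transpose_apply, cramer_eq_adjugate_mulVec, ← adjugate_transpose,
    det_eq_sum_mul_adjugate_row M j, map_sum]
  refine Finset.sum_congr rfl fun m _ => ?_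
  rw [D.leibniz, derivation_adjugate_eq_zero D j hM, smul_zero, zero_add, smul_eq_mul]
  rfl

end Determinant

section HermitianPencil

variable {ι : Type*} [DecidableEq ι] {A : Matrix ι ι ℂ}

lemma posDef_diagonal_sub_of_le {x z : ι → ℝ}
    (hpd : (diagonal (fun i => (z i : ℂ)) - A).PosDef) (hzx : z ≤ x) :
    (diagonal (fun i => (x i : ℂ)) - A).PosDef := by
  have hdiag : (diagonal fun i => (x i : ℂ) - z i).PosSemidef :=
    PosSemidef.diagonal fun i => sub_nonneg.2 (Complex.real_le_real.2 (hzx i))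
  rw [← diagonal_sub] at hdiag
  simpa only [sub_add_sub_cancel'] using hpd.add_posSemidef hdiag

lemma det_diagonal_sub_ne_zero [Fintype ι] (hA : A.IsHermitian) {w : ι → ℂ}
    (hw : ∀ i, 0 < (w i).im) : (diagonal w - A).det ≠ 0 := by
  intro hdet
  obtain ⟨v, hv, hv_ker⟩ := exists_mulVec_eq_zero_iff.2 hdet
  have him : (star v ⬝ᵥ diagonal w *ᵥ v).im = 0 := by
    rw [sub_mulVec, sub_eq_zero] at hv_ker
    rw [hv_ker]
    exact hA.im_star_dotProduct_mulVec_self v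
  have hsum : (star v ⬝ᵥ diagonal w *ᵥ v).im = ∑ i, (w i).im * Complex.normSq (v i) := by
    simp only [dotProduct, mulVec_diagonal, Complex.im_sum]
    refine Finset.sum_congr rfl fun i _ => ?_
    rw [Pi.star_apply, mul_left_comm, Complex.star_def, Complex.conj_mul', ← Complex.ofReal_pow,
      Complex.im_mul_ofReal, Complex.normSq_eq_norm_sq]
  obtain ⟨i, hi⟩ := Function.ne_iff.1 hv
  have hterm (m : ι) : 0 ≤ (w m).im * Complex.normSq (v m) :=
    mul_nonneg (hw m).le (Complex.normSq_nonneg _)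
  refine (Finset.sum_pos' (fun m _ => hterm m) ⟨i, Finset.mem_univ i,
    mul_pos (hw i) (Complex.normSq_pos.2 hi)⟩).ne' (hsum.symm.trans him)

end HermitianPencil

section ZsubA

variable {n : ℕ} (A : Matrix (Fin n) (Fin n) ℂ)

lemma pderiv_ZsubA_of_ne {i j : Fin n} (hij : i ≠ j) (m : Fin n) : pderiv j (ZsubA A i m) = 0 := by
  rcases eq_or_ne i m with rfl | him
  · simp [ZsubA, MvPolynomial.pderiv_X_of_ne hij]
  · simp [ZsubA, him]

lemma pderiv_ZsubA_self (j m : Fin n) :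
    pderiv j (ZsubA A j m) = (Pi.single j 1 : Fin n → MvPolynomial (Fin n) ℂ) m := by
  rcases eq_or_ne m j with rfl | hmj
  · simp [ZsubA]
  · simp [ZsubA, hmj, hmj.symm]

lemma pderiv_det_ZsubA (j : Fin n) :
    pderiv j (ZsubA A).det = (ZsubA A).adjugate j j := by
  rw [adjugate_apply, derivation_det_of_row _ j fun i => pderiv_ZsubA_of_ne A]
  simp only [pderiv_ZsubA_self]

lemma pderiv_pderiv_det_ZsubA (j : Fin n) : pderiv j (pderiv j (ZsubA A).det) = 0 := by
  rw [pderiv_det_ZsubA, derivation_adjugate_eq_zero _ j fun i => pderiv_ZsubA_of_ne A]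

lemma mixedPDeriv_det_ZsubA {l : List (Fin n)} (hl : l.Nodup) :
    mixedPDeriv l (ZsubA A).det
      = (Matrix.of fun i m => if i ∈ l then (1 : Matrix _ _ _) i m else ZsubA A i m).det := by
  induction l with
  | nil => simp only [mixedPDeriv_nil, List.not_mem_nil, if_false]; rfl
  | cons j l ih =>
    obtain ⟨hj, hl⟩ := List.nodup_cons.1 hl
    rw [mixedPDeriv_cons, ih hl, derivation_det_of_row _ j]
    · congr 1
      ext1 i m
      rcases eq_or_ne i j with rfl | hij
      · simp [hj, pderiv_ZsubA_self, one_apply, Pi.single_apply, eq_comm]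
      · simp [hij]
    · intro i hij m
      rw [of_apply]
      split_ifs
      · rw [one_apply, apply_ite (pderiv j), MvPolynomial.pderiv_one, map_zero, ite_self]
      · exact pderiv_ZsubA_of_ne A hij m

lemma mixedPDeriv_finRange_det_ZsubA : mixedPDeriv (List.finRange n) (ZsubA A).det = 1 := by
  rw [mixedPDeriv_det_ZsubA A (List.nodup_finRange n)]
  simp only [List.mem_finRange, if_true]
  exact det_one

lemma eval_ZsubA (w : Fin n → ℂ) :
    (ZsubA A).map (MvPolynomial.eval w) = diagonal w - A := by
  ext i m
  rcases eq_or_ne i m with rfl | him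
  · simp [ZsubA]
  · simp [ZsubA, him]

lemma eval_det_ZsubA (w : Fin n → ℂ) :
    MvPolynomial.eval w (ZsubA A).det = (diagonal w - A).det := by
  rw [RingHom.map_det, RingHom.mapMatrix_apply, eval_ZsubA]

lemma eval_pderiv_det_ZsubA (w : Fin n → ℂ) (j : Fin n) :
    MvPolynomial.eval w (pderiv j (ZsubA A).det) = (diagonal w - A).adjugate j j := by
  rw [pderiv_det_ZsubA, ← eval_ZsubA, ← RingHom.mapMatrix_apply, ← RingHom.map_adjugate]
  rfl

variable {A}

lemma map_conj_det_ZsubA (hA : A.IsHermitian) :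
    MvPolynomial.map (starRingEnd ℂ) (ZsubA A).det = (ZsubA A).det := by
  rw [RingHom.map_det, ← det_transpose]
  congr 1
  ext1 i m
  rcases eq_or_ne i m with rfl | him
  · simpa [ZsubA] using hA.apply i i
  · simp [ZsubA, him, him.symm, ← hA.apply i m]

lemma exists_map_eq_det_ZsubA (hA : A.IsHermitian) :
    ∃ f : MvPolynomial (Fin n) ℝ, MvPolynomial.map (algebraMap ℝ ℂ) f = (ZsubA A).det := by
  refine MvPolynomial.mem_range_map_iff_coeffs_subset.2 fun c hc => ?_
  obtain ⟨m, _, rfl⟩ := MvPolynomial.mem_coeffs_iff.1 hc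
  have hconj := congrArg (MvPolynomial.coeff m) (map_conj_det_ZsubA hA)
  rw [MvPolynomial.coeff_map] at hconj
  obtain ⟨r, hr⟩ := Complex.conj_eq_iff_real.1 hconj
  exact ⟨r, hr.symm⟩

variable {f : MvPolynomial (Fin n) ℝ}

lemma isRealStable_of_map_eq_det_ZsubA (hA : A.IsHermitian)
    (hf : MvPolynomial.map (algebraMap ℝ ℂ) f = (ZsubA A).det) : IsRealStable f := by
  intro w hw
  rw [aeval_eq_eval_of_map_eq hf, eval_det_ZsubA]
  exact det_diagonal_sub_ne_zero hA hw

lemma pderiv_pderiv_of_map_eq_det_ZsubA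
    (hf : MvPolynomial.map (algebraMap ℝ ℂ) f = (ZsubA A).det) (i : Fin n) :
    pderiv i (pderiv i f) = 0 := by
  refine MvPolynomial.map_injective _ (algebraMap ℝ ℂ).injective ?_
  rw [← MvPolynomial.pderiv_map, ← MvPolynomial.pderiv_map, hf, pderiv_pderiv_det_ZsubA, map_zero]

lemma mixedPDeriv_sq_ne_zero_of_map_eq_det_ZsubA
    (hf : MvPolynomial.map (algebraMap ℝ ℂ) f = (ZsubA A).det) :
    mixedPDeriv (List.finRange n) (f ^ 2) ≠ 0 := by
  intro hzero
  have hone : mixedPDeriv (List.finRange n) f = 1 := by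
    refine MvPolynomial.map_injective _ (algebraMap ℝ ℂ).injective ?_
    rw [map_mixedPDeriv, hf, mixedPDeriv_finRange_det_ZsubA, map_one]
  have h := mixedPDeriv_mixedPDeriv_sq (List.finRange n) (pderiv_pderiv_of_map_eq_det_ZsubA hf)
  rw [hzero, map_zero, hone, one_pow, mul_one] at h
  exact pow_ne_zero _ two_ne_zero h.symm

lemma barrier_of_map_eq_det_ZsubA (hf : MvPolynomial.map (algebraMap ℝ ℂ) f = (ZsubA A).det)
    (i : Fin n) (x : Fin n → ℝ) :
    barrier f i x = ((diagonal (fun m => (x m : ℂ)) - A)⁻¹ i i).re := by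
  have hf_i : MvPolynomial.map (algebraMap ℝ ℂ) (pderiv i f) = pderiv i (ZsubA A).det := by
    rw [← MvPolynomial.pderiv_map, hf]
  rw [inv_def, Matrix.smul_apply, ← eval_pderiv_det_ZsubA, ← eval_det_ZsubA,
    ← aeval_eq_eval_of_map_eq hf, ← aeval_eq_eval_of_map_eq hf_i, aeval_ofReal, aeval_ofReal,
    Ring.inverse_eq_inv', smul_eq_mul, mul_comm, ← div_eq_mul_inv, ← Complex.ofReal_div,
    Complex.ofReal_re, barrier]

lemma isBarrierPoint_sq_of_map_eq_det_ZsubA (hA : A.IsHermitian)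
    (hf : MvPolynomial.map (algebraMap ℝ ℂ) f = (ZsubA A).det) {z : Fin n → ℝ} {δ : ℝ}
    (hpd : (diagonal (fun i => (z i : ℂ)) - A).PosDef)
    (hδ : ∀ i, δ * (4 * ((diagonal (fun m => (z m : ℂ)) - A)⁻¹ i i).re) ≤ 1) :
    IsBarrierPoint δ (f ^ 2) z where
  isRealStable w hw := by
    rw [map_pow]
    exact pow_ne_zero 2 (isRealStable_of_map_eq_det_ZsubA hA hf w hw)
  pderiv_cubed i := pderiv_pderiv_pderiv_sq (pderiv_pderiv_of_map_eq_det_ZsubA hf i)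
  eval_pos x hx := by
    have hdet : MvPolynomial.aeval (fun i => (x i : ℂ)) f ≠ 0 := by
      rw [aeval_eq_eval_of_map_eq hf, eval_det_ZsubA]
      exact (posDef_diagonal_sub_of_le hpd hx).det_pos.ne'
    rw [aeval_ofReal, Complex.ofReal_ne_zero] at hdet
    rw [map_pow]
    exact sq_pos_of_ne_zero hdet
  mul_barrier_le i := by
    rw [barrier_sq, barrier_of_map_eq_det_ZsubA hf]
    linarith [hδ i]

end ZsubA

/-- For Hermitian `A` and `p = det(Z-A)²`, if `z ∈ ℝ^n` makes `Z - A` positive definite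
then, with `δ = min_i 1/(4((Z-A)^{-1})_{ii})`, the point `z - δ(1,…,1)` is above the roots
of `∂ⁿp/∂z₁⋯∂z_n`. -/
theorem mixed_derivative_above_roots {n : ℕ} (hn : 0 < n)
    (A : Matrix (Fin n) (Fin n) ℂ) (hA : A.IsHermitian)
    (z : Fin n → ℝ)
    (hpd : (Matrix.diagonal (fun i => (z i : ℂ)) - A).PosDef) :
    ∀ t : Fin n → ℝ, (∀ k, 0 ≤ t k) →
      MvPolynomial.eval
        (fun k => ((z k
            - Finset.univ.inf' (Finset.univ_nonempty_iff.mpr ⟨⟨0, hn⟩⟩)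
                (fun i => 1 / (4 * (((Matrix.diagonal (fun m => (z m : ℂ)) - A)⁻¹ i i).re)))
            + t k : ℝ) : ℂ))
        (((List.ofFn (fun i : Fin n => pd i)).prod) ((ZsubA A).det ^ 2)) ≠ 0 := by
  intro t ht
  set δ := Finset.univ.inf' (Finset.univ_nonempty_iff.mpr ⟨⟨0, hn⟩⟩)
    (fun i => 1 / (4 * (((Matrix.diagonal (fun m => (z m : ℂ)) - A)⁻¹ i i).re)))
  have hinv_pos (i : Fin n) : 0 < 4 * (((diagonal (fun m => (z m : ℂ)) - A)⁻¹ i i).re) :=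
    mul_pos four_pos (Complex.pos_iff.1 hpd.inv.diag_pos).1
  have hδ : 0 ≤ δ := Finset.le_inf' _ _ fun i _ => (one_div_pos.2 (hinv_pos i)).le
  have hδ_le (i : Fin n) : δ * (4 * ((diagonal (fun m => (z m : ℂ)) - A)⁻¹ i i).re) ≤ 1 :=
    (le_div_iff₀ (hinv_pos i)).1 (Finset.inf'_le _ (Finset.mem_univ i))
  obtain ⟨f, hf⟩ := exists_map_eq_det_ZsubA hA
  have hpoint := (isBarrierPoint_sq_of_map_eq_det_ZsubA hA hf hpd hδ_le).mixedPDeriv hδ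
    (mixedPDeriv_sq_ne_zero_of_map_eq_det_ZsubA hf)
  rw [← Fin.sum_univ_def, Finset.univ_sum_single] at hpoint
  have hpos := hpoint.eval_pos (fun k => z k - δ + t k) fun k => le_add_of_nonneg_right (ht k)
  rw [List.ofFn_eq_map, ← hf, ← map_pow]
  change MvPolynomial.eval _ (mixedPDeriv (List.finRange n) _) ≠ 0
  rw [← aeval_eq_eval_of_map_eq (map_mixedPDeriv _ _ _), aeval_ofReal]
  exact Complex.ofReal_ne_zero.2 hpos.ne'
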